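/- Let n ≥ 2, R > 0, c > 0, let a : (0,∞) → (0,∞) be C¹ satisfying 0 < λ ≤ 1 + s·a'(s)/a(s) ≤ Λ for all s > 0, let b be the inverse of s ↦ s·a(s), let K = R^{n−1}·c·a(c), let v(r) = ∫_r^R b(K·ρ^{1−n}) dρ, and define u : B_R(0)∖{0} → ℝ by u(x) = v(|x|). Then u is differentiable on B_R(0)∖{0} with ∇u(x) = −b(K·|x|^{1−n})·x/|x|, and the flux vector field satisfies a(|∇u(x)|)·∇u(x) = −K·x/|x|ⁿ for every x ∈ B_R(0)∖{0}. -/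

import Mathlib

/-!
Since `s ↦ s * a s` has derivative `a s * (1 + s * a' s / a s) > 0`, it is strictly increasing on
`(0, ∞)`; its inverse `b` is therefore increasing and maps `(0, ∞)` onto itself, so it is
continuous there (`continuousAt_of_inverse`). Hence the integrand defining `v` is continuous on
`(0, ∞)`, the fundamental theorem of calculus gives `v' r = -b (K * r ^ (1 - n))`, and the chain
rule with `∇‖x‖ = x / ‖x‖` (`hasFDerivAt_norm_of_ne_zero`) yields the gradient of `u`. The flux
identity is `b s * a (b s) = s` at `s = K * ‖x‖ ^ (1 - n)`.
-/

/-- Ellipticity from below makes `s ↦ s * a s` strictly increasing. -/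
lemma strictMonoOn_mul_self_of_elliptic {a : ℝ → ℝ} {lam : ℝ} (hlam : 0 < lam)
    (ha_pos : ∀ s : ℝ, 0 < s → 0 < a s)
    (ha_smooth : ContDiffOn ℝ 1 a (Set.Ioi 0))
    (h_ell : ∀ s : ℝ, 0 < s → lam ≤ 1 + s * deriv a s / a s) :
    StrictMonoOn (fun s => s * a s) (Set.Ioi 0) := by
  refine strictMonoOn_of_deriv_pos (convex_Ioi 0)
    (continuousOn_id.mul ha_smooth.continuousOn) fun s hs => ?_
  rw [interior_Ioi] at hs
  have hs0 : 0 < s := hs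
  have hd : HasDerivAt a (deriv a s) s :=
    ((ha_smooth.differentiableOn (by norm_num)).differentiableAt
      (Ioi_mem_nhds hs0)).hasDerivAt
  have h1 := ((hasDerivAt_id s).mul hd).deriv
  have h2 : deriv (fun s => s * a s) s = a s * (1 + s * deriv a s / a s) := by
    have := (ha_pos s hs0).ne'
    refine h1.trans ?_
    simp only [id]
    field_simp
  rw [h2]
  exact mul_pos (ha_pos s hs0) (hlam.trans_le (h_ell s hs0))

/-- The inverse of a strictly increasing bijection of `(0, ∞)` is monotone and onto `(0, ∞)`,
hence continuous. -/
lemma continuousAt_of_inverse {g b : ℝ → ℝ} (hg : StrictMonoOn g (Set.Ioi 0))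
    (hg_pos : ∀ s : ℝ, 0 < s → 0 < g s) (hb_pos : ∀ s : ℝ, 0 < s → 0 < b s)
    (hb_left : ∀ s : ℝ, 0 < s → b (g s) = s) (hb_right : ∀ s : ℝ, 0 < s → g (b s) = s)
    {t : ℝ} (ht : 0 < t) : ContinuousAt b t := by
  have hmono : MonotoneOn b (Set.Ioi 0) := by
    intro x hx y hy hxy
    rw [← hg.le_iff_le (hb_pos x hx) (hb_pos y hy), hb_right x hx, hb_right y hy]
    exact hxy
  refine continuousAt_of_monotoneOn_of_image_mem_nhds hmono (Ioi_mem_nhds ht) ?_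
  exact Filter.mem_of_superset (Ioi_mem_nhds (hb_pos t ht))
    fun s hs => ⟨g s, hg_pos s hs, hb_left s hs⟩

lemma hasFDerivAt_norm_of_ne_zero {E : Type*} [NormedAddCommGroup E] [InnerProductSpace ℝ E]
    {x : E} (hx : x ≠ 0) : HasFDerivAt (fun y : E => ‖y‖) (‖x‖⁻¹ • innerSL ℝ x) x := by
  have h := (hasStrictFDerivAt_norm_sq x).hasFDerivAt.sqrt (by simpa using hx)
  simp only [Real.sqrt_sq (norm_nonneg _)] at h
  convert h using 1
  ext y
  simp
  field_simp

/-- For `u(x) = v(|x|)` with `v(r) = ∫_r^R b(K·ρ^(1-n)) dρ` and `K = R^(n-1)·c·a(c)`,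
`u` is differentiable on `B_R(0)∖{0}` with gradient `∇u(x) = -b(K·|x|^(1-n))·x/|x|`, and the
flux satisfies `a(|∇u(x)|)·∇u(x) = -K·x/|x|ⁿ` there. -/
theorem stmt14 (n : ℕ) (hn : 2 ≤ n) (R c lam Lam : ℝ) (hR : 0 < R) (hc : 0 < c)
    (a b : ℝ → ℝ) (hlam : 0 < lam)
    (ha_pos : ∀ s : ℝ, 0 < s → 0 < a s)
    (ha_smooth : ContDiffOn ℝ 1 a (Set.Ioi 0))
    (h_ell : ∀ s : ℝ, 0 < s →
      lam ≤ 1 + s * deriv a s / a s ∧ 1 + s * deriv a s / a s ≤ Lam)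
    (hb_pos : ∀ s : ℝ, 0 < s → 0 < b s)
    (hb_left : ∀ s : ℝ, 0 < s → b (s * a s) = s)
    (hb_right : ∀ s : ℝ, 0 < s → b s * a (b s) = s) :
    let K : ℝ := R ^ (n - 1) * (c * a c)
    let v : ℝ → ℝ := fun r => ∫ ρ in r..R, b (K * ρ ^ ((1 : ℝ) - n))
    let u : EuclideanSpace ℝ (Fin n) → ℝ := fun x => v ‖x‖
    ∀ x : EuclideanSpace ℝ (Fin n), x ≠ 0 → ‖x‖ < R →
      HasGradientAt u ((-(b (K * ‖x‖ ^ ((1 : ℝ) - n))) / ‖x‖) • x) x ∧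
      a ‖(-(b (K * ‖x‖ ^ ((1 : ℝ) - n))) / ‖x‖) • x‖ •
          ((-(b (K * ‖x‖ ^ ((1 : ℝ) - n))) / ‖x‖) • x) =
        (-(K / ‖x‖ ^ n)) • x := by
  intro K v u x hx hxR
  have hr : 0 < ‖x‖ := norm_pos_iff.mpr hx
  have hK : 0 < K := mul_pos (pow_pos hR _) (mul_pos hc (ha_pos c hc))
  have hf_pos : ∀ ρ : ℝ, 0 < ρ → 0 < K * ρ ^ ((1 : ℝ) - n) :=
    fun ρ hρ => mul_pos hK (Real.rpow_pos_of_pos hρ _)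
  have hf_cont : ∀ ρ : ℝ, 0 < ρ → ContinuousAt (fun ρ : ℝ => b (K * ρ ^ ((1 : ℝ) - n))) ρ := by
    intro ρ hρ
    refine ContinuousAt.comp (g := b) ?_
      (continuousAt_const.mul (Real.continuousAt_rpow_const ρ _ (Or.inl hρ.ne')))
    exact continuousAt_of_inverse
      (strictMonoOn_mul_self_of_elliptic hlam ha_pos ha_smooth fun s hs => (h_ell s hs).1)
      (fun s hs => mul_pos hs (ha_pos s hs)) hb_pos hb_left hb_right (hf_pos ρ hρ)
  have hv : HasDerivAt v (-b (K * ‖x‖ ^ ((1 : ℝ) - n))) ‖x‖ := by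
    refine intervalIntegral.integral_hasDerivAt_left ?_ ?_ (hf_cont _ hr)
    · refine ContinuousOn.intervalIntegrable fun ρ hρ => (hf_cont ρ ?_).continuousWithinAt
      rw [Set.uIcc_of_le hxR.le] at hρ
      exact hr.trans_le hρ.1
    · exact ContinuousOn.stronglyMeasurableAtFilter isOpen_Ioi
        (fun ρ hρ => (hf_cont ρ hρ).continuousWithinAt) _ hr
  have hB := hb_pos _ (hf_pos _ hr)
  have hBa := hb_right _ (hf_pos _ hr)
  have hpow : K * ‖x‖ ^ ((1 : ℝ) - n) = K / ‖x‖ ^ n * ‖x‖ := by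
    rw [Real.rpow_sub hr, Real.rpow_one, Real.rpow_natCast]
    ring
  constructor
  · rw [hasGradientAt_iff_hasFDerivAt]
    refine (hv.comp_hasFDerivAt x (hasFDerivAt_norm_of_ne_zero hx)).congr_fderiv ?_
    ext y
    simp
    ring
  · have hnorm : ‖(-(b (K * ‖x‖ ^ ((1 : ℝ) - n))) / ‖x‖) • x‖ = b (K * ‖x‖ ^ ((1 : ℝ) - n)) := by
      rw [norm_smul, Real.norm_eq_abs, abs_div, abs_neg, abs_of_pos hB, abs_of_pos hr,
        div_mul_cancel₀ _ hr.ne']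
    rw [hnorm, smul_smul]
    congr 1
    rw [mul_div_assoc', div_eq_iff hr.ne', neg_mul, ← hpow]
    linarith
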